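/- arXiv:2503.08312 — 3 statements merged into one kernel-verified Lean document; each statement's English description precedes it below -/
import Mathlib

section
/- Let (W', β) be a 6-dimensional symplectic space over GF(2) (β alternating and nondegenerate on W'), and let w_1, w_2, w_3 ∈ W' be linearly independent and pairwise orthogonal vectors. Then there exist 5-dimensional subspaces U', U'' ≤ W', each containing w_1, w_2, w_3 and each isometric to U, such that Rad(U') = span{w_1 + w_2} and Rad(U'') = span{w_2 + w_3}. Consequently W' contains two isometric copies of U whose radicals are distinct. -/
open Module Submodule

/-- A subspace `X` of `(V, βV)` is isometric to a subspace `Y` of `(W, βW)`: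
there is a linear isomorphism `X ≃ Y` carrying `βV` to `βW`. -/
def IsIsometricPair {V W : Type*} [AddCommGroup V] [Module (ZMod 2) V]
    [AddCommGroup W] [Module (ZMod 2) W]
    (βV : V →ₗ[ZMod 2] V →ₗ[ZMod 2] ZMod 2) (X : Submodule (ZMod 2) V)
    (βW : W →ₗ[ZMod 2] W →ₗ[ZMod 2] ZMod 2) (Y : Submodule (ZMod 2) W) : Prop :=
  ∃ f : X ≃ₗ[ZMod 2] Y, ∀ x y : X, βV (x : V) (y : V) = βW (f x : W) (f y : W)

/-- The radical of a subspace `X` with respect to the bilinear form `β`: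
`{x ∈ X | ∀ y ∈ X, β x y = 0}`. -/
def srad {W : Type*} [AddCommGroup W] [Module (ZMod 2) W]
    (β : W →ₗ[ZMod 2] W →ₗ[ZMod 2] ZMod 2) (X : Submodule (ZMod 2) W) :
    Submodule (ZMod 2) W :=
  X ⊓ (⨅ y ∈ X, LinearMap.ker (β.flip y))

/-- A family of hyperbolic pairs `(e i, f i)`, `i : Fin 3`, for the bilinear form `β`. -/
structure IsHyperbolicTriple {W : Type*} [AddCommGroup W] [Module (ZMod 2) W]
    (β : W →ₗ[ZMod 2] W →ₗ[ZMod 2] ZMod 2) (e f : Fin 3 → W) : Prop where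
  left_left : ∀ i j, β (e i) (e j) = 0
  right_right : ∀ i j, β (f i) (f j) = 0
  left_right : ∀ i j, β (e i) (f j) = if i = j then 1 else 0
  right_left : ∀ i j, β (f i) (e j) = if i = j then 1 else 0

/-- The spanning family of the subspace `U` attached to a triple of hyperbolic pairs. -/
def hyperbolicFamily {W : Type*} [AddCommGroup W] (e f : Fin 3 → W) : Fin 5 → W :=
  ![e 0, e 1, e 2, f 0 + f 1, f 2]

/-- Over `ZMod 2`, an alternating form is symmetric. -/
theorem LinearMap.apply_comm_of_apply_self_eq_zero
    {W : Type*} [AddCommGroup W] [Module (ZMod 2) W]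
    {β : W →ₗ[ZMod 2] W →ₗ[ZMod 2] ZMod 2} (halt : ∀ w, β w w = 0) (x y : W) :
    β x y = β y x := by
  have h := halt (x + y)
  simp only [map_add, LinearMap.add_apply, halt, zero_add, add_zero] at h
  exact (CharTwo.add_eq_zero.mp h).symm

theorem isIsometricPair_span_range {ι V W : Type*} [AddCommGroup V] [Module (ZMod 2) V]
    [AddCommGroup W] [Module (ZMod 2) W]
    {βV : V →ₗ[ZMod 2] V →ₗ[ZMod 2] ZMod 2} {βW : W →ₗ[ZMod 2] W →ₗ[ZMod 2] ZMod 2}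
    {u : ι → V} {v : ι → W} (hu : LinearIndependent (ZMod 2) u)
    (hv : LinearIndependent (ZMod 2) v) (h : ∀ i j, βV (u i) (u j) = βW (v i) (v j)) :
    IsIsometricPair βV (span (ZMod 2) (Set.range u)) βW (span (ZMod 2) (Set.range v)) := by
  let g := (Basis.span hu).equiv (Basis.span hv) (Equiv.refl ι)
  have key : βV.compl₁₂ (Submodule.subtype _) (Submodule.subtype _) =
      βW.compl₁₂ (Submodule.subtype _ ∘ₗ g.toLinearMap)
        (Submodule.subtype _ ∘ₗ g.toLinearMap) := by
    refine LinearMap.ext_basis (Basis.span hu) (Basis.span hu) fun i j => ?_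
    have hg (k : ι) : (g (Basis.span hu k) : W) = v k := by
      rw [Basis.equiv_apply, Equiv.refl_apply, Basis.span_apply]
    simp only [LinearMap.compl₁₂_apply, LinearMap.comp_apply, subtype_apply,
      LinearEquiv.coe_coe, hg]
    rw [Basis.span_apply, Basis.span_apply, h]
  exact ⟨g, fun x y => LinearMap.congr_fun₂ key x y⟩

namespace IsHyperbolicTriple

variable {W : Type*} [AddCommGroup W] [Module (ZMod 2) W]
  {β : W →ₗ[ZMod 2] W →ₗ[ZMod 2] ZMod 2} {e f : Fin 3 → W}

theorem comp_perm (h : IsHyperbolicTriple β e f) (σ : Equiv.Perm (Fin 3)) :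
    IsHyperbolicTriple β (e ∘ σ) (f ∘ σ) where
  left_left _ _ := h.left_left _ _
  right_right _ _ := h.right_right _ _
  left_right i j := by simp [h.left_right]
  right_left i j := by simp [h.right_left]

theorem linearIndependent (h : IsHyperbolicTriple β e f) :
    LinearIndependent (ZMod 2) (hyperbolicFamily e f) := by
  rw [Fintype.linearIndependent_iff]
  intro c hc
  have pair (y : W) : β (∑ i, c i • hyperbolicFamily e f i) y = 0 := by rw [hc]; simp
  simp only [Fin.sum_univ_five, hyperbolicFamily] at pair
  have he0 := pair (e 0)
  have he2 := pair (e 2)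
  have hf0 := pair (f 0)
  have hf1 := pair (f 1)
  have hf2 := pair (f 2)
  simp [h.left_left, h.right_right, h.left_right, h.right_left] at he0 he2 hf0 hf1 hf2
  intro i
  fin_cases i <;> assumption

theorem finrank_span (h : IsHyperbolicTriple β e f) :
    finrank (ZMod 2) (span (ZMod 2) (Set.range (hyperbolicFamily e f))) = 5 := by
  simpa using finrank_span_eq_card h.linearIndependent

theorem srad_span (h : IsHyperbolicTriple β e f) :
    srad β (span (ZMod 2) (Set.range (hyperbolicFamily e f))) =
      span (ZMod 2) {e 0 + e 1} := by
  have mem (i : Fin 5) :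
      hyperbolicFamily e f i ∈ span (ZMod 2) (Set.range (hyperbolicFamily e f)) :=
    subset_span ⟨i, rfl⟩
  apply le_antisymm
  · rintro x ⟨hx, hrad⟩
    obtain ⟨c, rfl⟩ := (mem_span_range_iff_exists_fun (ZMod 2)).mp hx
    have pair (i : Fin 5) :
        β (∑ i, c i • hyperbolicFamily e f i) (hyperbolicFamily e f i) = 0 := by
      simp only [SetLike.mem_coe, mem_iInf] at hrad
      exact hrad _ (mem i)
    have h0 := pair 0
    have h2 := pair 2
    have h3 := pair 3
    have h4 := pair 4
    simp [Fin.sum_univ_five, hyperbolicFamily, h.left_left, h.right_right, h.left_right,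
      h.right_left] at h0 h2 h3 h4
    rw [CharTwo.add_eq_zero] at h3
    refine mem_span_singleton.mpr ⟨c 0, ?_⟩
    simp [Fin.sum_univ_five, hyperbolicFamily, h0, h2, h3, h4]
  · rw [span_singleton_le_iff_mem]
    refine ⟨add_mem (mem 0) (mem 1), ?_⟩
    simp only [SetLike.mem_coe, mem_iInf]
    intro y hy
    change β (e 0 + e 1) y = 0
    refine (span_le (p := LinearMap.ker (β (e 0 + e 1)))).mpr ?_ hy
    rintro _ ⟨i, rfl⟩
    fin_cases i <;>
      simp [hyperbolicFamily, h.left_left, h.left_right, CharTwo.add_self_eq_zero]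

theorem isIsometricPair_span (h : IsHyperbolicTriple β e f)
    {V : Type*} [AddCommGroup V] [Module (ZMod 2) V]
    {βV : V →ₗ[ZMod 2] V →ₗ[ZMod 2] ZMod 2} {e' f' : Fin 3 → V}
    (h' : IsHyperbolicTriple βV e' f') :
    IsIsometricPair β (span (ZMod 2) (Set.range (hyperbolicFamily e f)))
      βV (span (ZMod 2) (Set.range (hyperbolicFamily e' f'))) := by
  refine isIsometricPair_span_range h.linearIndependent h'.linearIndependent fun i j => ?_
  fin_cases i <;> fin_cases j <;>
    simp [hyperbolicFamily, h.left_left, h.right_right, h.left_right, h.right_left,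
      h'.left_left, h'.right_right, h'.left_right, h'.right_left]

/-- Three independent, pairwise orthogonal vectors extend to three hyperbolic pairs. -/
theorem exists_of_linearIndependent [FiniteDimensional (ZMod 2) W] (halt : ∀ w, β w w = 0)
    (hnd : LinearMap.ker β = ⊥) (hli : LinearIndependent (ZMod 2) e)
    (horth : ∀ i j, β (e i) (e j) = 0) : ∃ f, IsHyperbolicTriple β e f := by
  have hcomm := LinearMap.apply_comm_of_apply_self_eq_zero halt
  have hsurj : Function.Surjective β :=
    (LinearMap.injective_iff_surjective_of_finrank_eq_finrank
      (Subspace.dual_finrank_eq (K := ZMod 2) (V := W)).symm).mp (LinearMap.ker_eq_bot.mp hnd)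
  have hdual (j : Fin 3) : ∃ g, ∀ i, β (e i) g = if i = j then 1 else 0 := by
    obtain ⟨φ, hφ⟩ := LinearMap.exists_extend
      ((Basis.span hli).constr (ZMod 2) fun i => if i = j then (1 : ZMod 2) else 0)
    obtain ⟨g, rfl⟩ := hsurj φ
    refine ⟨g, fun i => ?_⟩
    have := LinearMap.congr_fun hφ (Basis.span hli i)
    rw [Basis.constr_basis] at this
    rw [hcomm, ← this]
    simp [Basis.span_apply]
  choose g hg using hdual
  have hg' (i j : Fin 3) : β (g j) (e i) = if i = j then 1 else 0 := by rw [hcomm, hg]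
  let f : Fin 3 → W :=
    ![g 0, g 1 + β (g 0) (g 1) • e 0,
      g 2 + β (g 0) (g 2) • e 0 + β (g 1) (g 2) • e 1]
  have hef (i j : Fin 3) : β (e i) (f j) = if i = j then 1 else 0 := by
    fin_cases j <;> simp [f, hg, horth]
  have h01 : β (f 0) (f 1) = 0 := by simp [f, hg', CharTwo.add_self_eq_zero]
  have h02 : β (f 0) (f 2) = 0 := by simp [f, hg', CharTwo.add_self_eq_zero]
  have h12 : β (f 1) (f 2) = 0 := by
    simp [f, hg, hg', horth, CharTwo.add_self_eq_zero]
  refine ⟨f, horth, fun i j => ?_, hef, fun i j => ?_⟩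
  · fin_cases i <;> fin_cases j <;>
      first
      | exact halt _
      | assumption
      | (rw [hcomm]; assumption)
  · rw [hcomm, hef]
    simp only [eq_comm]

end IsHyperbolicTriple

/-- In a 6-dimensional symplectic space `(W, βW)` over `GF(2)`, for any linearly
independent pairwise orthogonal `w₁, w₂, w₃` there are two 5-dimensional subspaces
containing `w₁, w₂, w₃`, both isometric to the 5-dimensional space
`U = span{e₁, e₂, e₃, e₁* + e₂*, e₃*}` (sitting in a symplectic space `V` with hyperbolic
basis `e_i = b (i, false)`, `e_i* = b (i, true)`), whose radicals are `span{w₁ + w₂}` and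
`span{w₂ + w₃}` respectively; in particular their radicals are distinct. -/
theorem two_copies_of_U_with_distinct_radicals
    (V : Type*) [AddCommGroup V] [Module (ZMod 2) V]
    (β : V →ₗ[ZMod 2] V →ₗ[ZMod 2] ZMod 2)
    (b : Basis (ℕ × Bool) (ZMod 2) V)
    (halt : ∀ v : V, β v v = 0)
    (hef : ∀ i j : ℕ, β (b (i, false)) (b (j, true)) = if i = j then 1 else 0)
    (hee : ∀ i j : ℕ, β (b (i, false)) (b (j, false)) = 0)
    (hff : ∀ i j : ℕ, β (b (i, true)) (b (j, true)) = 0)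
    (W : Type*) [AddCommGroup W] [Module (ZMod 2) W]
    (βW : W →ₗ[ZMod 2] W →ₗ[ZMod 2] ZMod 2)
    (haltW : ∀ w : W, βW w w = 0)
    (hnd : LinearMap.ker βW = ⊥)
    (hdimW : finrank (ZMod 2) W = 6)
    (w₁ w₂ w₃ : W)
    (hli : LinearIndependent (ZMod 2) ![w₁, w₂, w₃])
    (h12 : βW w₁ w₂ = 0) (h13 : βW w₁ w₃ = 0) (h23 : βW w₂ w₃ = 0) :
    ∃ U' U'' : Submodule (ZMod 2) W,
      finrank (ZMod 2) U' = 5 ∧ finrank (ZMod 2) U'' = 5 ∧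
      w₁ ∈ U' ∧ w₂ ∈ U' ∧ w₃ ∈ U' ∧
      w₁ ∈ U'' ∧ w₂ ∈ U'' ∧ w₃ ∈ U'' ∧
      IsIsometricPair βW U' β
        (span (ZMod 2) ({b (1, false), b (2, false), b (3, false),
          b (1, true) + b (2, true), b (3, true)} : Set V)) ∧
      IsIsometricPair βW U'' β
        (span (ZMod 2) ({b (1, false), b (2, false), b (3, false),
          b (1, true) + b (2, true), b (3, true)} : Set V)) ∧
      srad βW U' = span (ZMod 2) ({w₁ + w₂} : Set W) ∧
      srad βW U'' = span (ZMod 2) ({w₂ + w₃} : Set W) ∧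
      srad βW U' ≠ srad βW U'' := by
  have : FiniteDimensional (ZMod 2) W := FiniteDimensional.of_finrank_pos (by omega)
  have horth : ∀ i j, βW (![w₁, w₂, w₃] i) (![w₁, w₂, w₃] j) = 0 := by
    have hcomm := LinearMap.apply_comm_of_apply_self_eq_zero haltW
    intro i j
    fin_cases i <;> fin_cases j <;>
      simp [haltW, h12, h13, h23, hcomm w₂ w₁, hcomm w₃ w₁, hcomm w₃ w₂]
  obtain ⟨f, hW⟩ := IsHyperbolicTriple.exists_of_linearIndependent haltW hnd hli horth
  have hW' := hW.comp_perm (finRotate 3)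
  have hV : IsHyperbolicTriple β (fun i : Fin 3 => b (i + 1, false))
      (fun i : Fin 3 => b (i + 1, true)) := by
    refine ⟨fun _ _ => hee _ _, fun _ _ => hff _ _, fun i j => ?_, fun i j => ?_⟩
    · simp [hef, Fin.ext_iff]
    · rw [LinearMap.apply_comm_of_apply_self_eq_zero halt]
      simp [hef, Fin.ext_iff, eq_comm]
  have hU : ({b (1, false), b (2, false), b (3, false), b (1, true) + b (2, true),
      b (3, true)} : Set V) = Set.range (hyperbolicFamily
        (fun i : Fin 3 => b (i + 1, false)) (fun i : Fin 3 => b (i + 1, true))) := by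
    simp only [hyperbolicFamily, Matrix.range_cons, Matrix.range_empty, Set.union_empty,
      Set.singleton_union]
    rfl
  have hrad := hW.srad_span
  have hrad' := hW'.srad_span
  rw [show (![w₁, w₂, w₃] : Fin 3 → W) 0 + ![w₁, w₂, w₃] 1 = w₁ + w₂ from rfl] at hrad
  rw [show (![w₁, w₂, w₃] ∘ finRotate 3) 0 + (![w₁, w₂, w₃] ∘ finRotate 3) 1 =
    w₂ + w₃ from rfl] at hrad'
  rw [hU]
  refine ⟨_, _, hW.finrank_span, hW'.finrank_span, subset_span ⟨0, rfl⟩,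
    subset_span ⟨1, rfl⟩, subset_span ⟨2, rfl⟩, subset_span ⟨2, rfl⟩, subset_span ⟨0, rfl⟩,
    subset_span ⟨1, rfl⟩, hW.isIsometricPair_span hV, hW'.isIsometricPair_span hV,
    hrad, hrad', ?_⟩
  rw [hrad, hrad']
  intro heq
  obtain ⟨c, hc⟩ := mem_span_singleton.mp (heq ▸ mem_span_singleton_self (w₁ + w₂))
  have h1 : βW w₁ (f 0) = 1 := hW.left_right 0 0
  have h2 : βW w₂ (f 0) = 0 := hW.left_right 1 0
  have h3 : βW w₃ (f 0) = 0 := hW.left_right 2 0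
  simpa [h1, h2, h3] using congrArg (fun x => βW x (f 0)) hc
end

section
/- Let V be a vector space over GF(2) of countably infinite dimension and A1 a finite-dimensional subspace of V. Then the family of all finite-dimensional subspaces of V that contain A1 has the Ramsey property: for all finite-dimensional subspaces A, B with A1 ≤ A ≤ B ≤ V and every r ∈ ℕ, there exists a finite-dimensional subspace C with A1 ≤ C ≤ V such that for every coloring ξ : {U : A1 ≤ U ≤ C, dim U = dim A} → {0, ..., r−1} there exists a subspace B' with A1 ≤ B' ≤ C and dim B' = dim B such that ξ is constant on the set {U : A1 ≤ U ≤ B', dim U = dim A}. -/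
open Module Submodule

universe u

theorem finrank_map_of_injective {F V W : Type*} [Field F] [AddCommGroup V] [Module F V]
    [AddCommGroup W] [Module F W] {f : V →ₗ[F] W} (hf : Function.Injective f)
    (S : Submodule F V) : finrank F (S.map f) = finrank F S :=
  (S.equivMapOfInjective f hf).finrank_eq.symm

theorem exists_le_map_eq {F V W : Type*} [Field F] [AddCommGroup V] [Module F V]
    [AddCommGroup W] [Module F W] {f : V →ₗ[F] W} (hf : Function.Injective f)
    {S : Submodule F V} {U : Submodule F W} (h : U ≤ S.map f) :
    ∃ T ≤ S, T.map f = U ∧ finrank F T = finrank F U := by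
  have hU : (U.comap f).map f = U :=
    map_comap_eq_of_le (h.trans LinearMap.map_le_range)
  refine ⟨U.comap f, ?_, hU, ?_⟩
  · simpa [comap_map_eq_of_injective hf] using comap_mono (f := f) h
  · rw [← finrank_map_of_injective hf, hU]

theorem finrank_prod_top {F D : Type*} [Field F] [AddCommGroup D] [Module F D]
    [FiniteDimensional F D] (T : Submodule F D) :
    finrank F (T.prod (⊤ : Submodule F F)) = finrank F T + 1 := by
  have hrange : LinearMap.range (T.subtype.prodMap (LinearMap.id : F →ₗ[F] F)) = T.prod ⊤ := by
    ext ⟨x, a⟩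
    simp
  rw [← hrange, LinearMap.finrank_range_of_inj (T.subtype_injective.prodMap fun _ _ h ↦ h),
    finrank_prod, finrank_self]

/-- The colors of the graphs of linear maps over subspaces of `D` can be made to depend only on the
subspace of `D`, after passing to a copy of `D × F`. This is the Hales-Jewett theorem with the dual
of `D` as alphabet. -/
theorem exists_prod_embedding_color_eq {F : Type*} [Field F] [Finite F] (κ : Type*) [Finite κ]
    (D : Type*) [AddCommGroup D] [Module F D] [FiniteDimensional F D] :
    ∃ N : ℕ, ∀ (W : Type*) [AddCommGroup W] [Module F W] [FiniteDimensional F W],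
      N ≤ finrank F W → ∀ c : Submodule F W → κ,
        ∃ Φ : D × F →ₗ[F] W, Function.Injective Φ ∧
          ∀ (g : D →ₗ[F] F) (T : Submodule F D),
            c (T.map (Φ ∘ₗ LinearMap.id.prod g)) = c (T.map (Φ ∘ₗ LinearMap.inl F D F)) := by
  have : Finite D := Module.finite_of_finite F
  have : Finite (D →ₗ[F] F) := DFunLike.finite _
  obtain ⟨ι, _, hι⟩ :=
    Combinatorics.Line.exists_mono_in_high_dimension (D →ₗ[F] F) (Submodule F D → κ)
  refine ⟨finrank F (D × (ι → F)), fun W _ _ _ hN c ↦ ?_⟩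
  obtain ⟨Ψ, hΨ⟩ : ∃ Ψ : D × (ι → F) →ₗ[F] W, Function.Injective Ψ := by
    exact finrank_le_iff_exists_linearMap.mp hN
  obtain ⟨l, b, hl⟩ := hι fun w T ↦ c (T.map (Ψ ∘ₗ LinearMap.id.prod (LinearMap.pi w)))
  let v : ι → F := fun j ↦ if l.idxFun j = none then 1 else 0
  let Φ : D × F →ₗ[F] W := Ψ ∘ₗ
    (LinearMap.fst F D F).prod
      (LinearMap.pi (l 0) ∘ₗ LinearMap.fst F D F + (LinearMap.snd F D F).smulRight v)
  have key (g : D →ₗ[F] F) :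
      Φ ∘ₗ LinearMap.id.prod g = Ψ ∘ₗ LinearMap.id.prod (LinearMap.pi (l g)) := by
    ext x
    simp only [Φ, LinearMap.comp_apply]
    congr 1
    ext j
    · simp
    · rcases h : l.idxFun j with _ | a <;>
        simp [v, h, Combinatorics.Line.apply_def]
  have hinl : LinearMap.inl F D F = LinearMap.id.prod 0 := rfl
  refine ⟨Φ, hΨ.comp ?_, fun g T ↦ ?_⟩
  · rintro ⟨x, a⟩ ⟨y, b⟩ h
    obtain ⟨j, hj⟩ := l.proper
    obtain rfl : x = y := congrArg Prod.fst h
    have := congrFun (congrArg Prod.snd h) j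
    simpa [v, hj] using this
  · rw [hinl, key, key]
    exact (congrFun (hl g) T).trans (congrFun (hl 0) T).symm

/-- A subspace of `D × F` either contains the line `0 × F` or is a graph over its projection. -/
theorem eq_prod_top_or_eq_map_graph {F D : Type*} [Field F] [AddCommGroup D] [Module F D]
    (U : Submodule F (D × F)) :
    U = (U.map (LinearMap.fst F D F)).prod ⊤ ∨
      ∃ g : D →ₗ[F] F, U = (U.map (LinearMap.fst F D F)).map (LinearMap.id.prod g) := by
  by_cases h : (0, 1) ∈ U
  · left
    ext ⟨x, a⟩
    simp only [mem_prod, mem_map, LinearMap.fst_apply, Prod.exists, exists_and_right,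
      exists_eq_right, mem_top, and_true]
    refine ⟨fun hx ↦ ⟨a, hx⟩, fun ⟨b, hb⟩ ↦ ?_⟩
    simpa using U.add_mem hb (U.smul_mem (a - b) h)
  · right
    have hker : LinearMap.ker (LinearMap.fst F D F ∘ₗ U.subtype) = ⊥ := by
      rw [LinearMap.ker_eq_bot']
      rintro ⟨⟨x, a⟩, hx⟩ h0
      obtain rfl : x = 0 := h0
      by_contra hne
      have ha : a ≠ 0 := by rintro rfl; exact hne rfl
      exact h (by simpa [ha] using U.smul_mem a⁻¹ hx)
    obtain ⟨p, hp⟩ := LinearMap.exists_leftInverse_of_injective _ hker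
    refine ⟨LinearMap.snd F D F ∘ₗ U.subtype ∘ₗ p, ?_⟩
    have hu (u : D × F) (hu : u ∈ U) : (u.1, (p u.1 : D × F).2) = u := by
      have : p u.1 = ⟨u, hu⟩ := LinearMap.congr_fun hp ⟨u, hu⟩
      rw [this]
    ext w
    simp only [mem_map]
    constructor
    · exact fun hw ↦ ⟨w.1, ⟨w, hw, rfl⟩, hu w hw⟩
    · rintro ⟨_, ⟨u, hu', rfl⟩, rfl⟩
      exact (hu u hu').symm ▸ hu'

/-- The **Graham-Leeb-Rothschild theorem** for a finite field, in off-diagonal form: in a space of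
large dimension with colored `k`-dimensional subspaces, there are a color `i` and a subspace of
dimension `f i` all of whose `k`-dimensional subspaces have color `i`. -/
theorem exists_monochromatic_subspace (F : Type u) [Field F] [Finite F] {κ : Type*} [Finite κ]
    (k : ℕ) (f : κ → ℕ) :
    ∃ N : ℕ, ∀ (W : Type u) [AddCommGroup W] [Module F W] [FiniteDimensional F W],
      N ≤ finrank F W → ∀ c : Submodule F W → κ,
        ∃ i, ∃ S : Submodule F W, finrank F S = f i ∧ ∀ U ≤ S, finrank F U = k → c U = i := by
  classical
  have := Fintype.ofFinite κ
  induction k generalizing f with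
  | zero =>
    refine ⟨∑ i, f i, fun W _ _ _ hN c ↦ ⟨c ⊥, ?_⟩⟩
    obtain ⟨S, hS⟩ : ∃ S : Submodule F W, finrank F S = f (c ⊥) := by
      obtain ⟨φ, hφ⟩ := (finrank_le_iff_exists_linearMap (R := F) (M := Fin (f (c ⊥)) → F)
        (M' := W)).mp (by
          rw [finrank_fin_fun]
          exact (Finset.single_le_sum (fun _ _ ↦ Nat.zero_le _) (Finset.mem_univ _)).trans hN)
      exact ⟨LinearMap.range φ, by rw [LinearMap.finrank_range_of_inj hφ, finrank_fin_fun]⟩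
    refine ⟨S, hS, fun U _ hU ↦ ?_⟩
    rw [Submodule.finrank_eq_zero.mp hU]
  | succ k ih =>
    induction hn : ∑ i, f i using Nat.strong_induction_on generalizing f with
    | _ n ihn =>
    by_cases h0 : ∃ i, f i = 0
    · obtain ⟨i, hi⟩ := h0
      refine ⟨0, fun W _ _ _ _ c ↦ ⟨i, ⊥, by simp [hi], fun U hU hUk ↦ ?_⟩⟩
      rw [le_bot_iff.mp hU, finrank_bot] at hUk
      omega
    push Not at h0
    have step (i : κ) := ihn (∑ j, Function.update f i (f i - 1) j) (by
      rw [← hn]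
      refine Finset.sum_lt_sum (fun j _ ↦ ?_) ⟨i, Finset.mem_univ i, ?_⟩
      · rcases eq_or_ne j i with rfl | hj <;> simp [*]
      · simpa using Nat.pos_of_ne_zero (h0 i)) _ rfl
    choose M hM using step
    obtain ⟨d, hd⟩ := ih fun _ ↦ ∑ i, M i
    obtain ⟨N, hN⟩ := exists_prod_embedding_color_eq.{u, _, u, u} (F := F) κ (Fin d → F)
    refine ⟨N, fun W _ _ _ hW c ↦ ?_⟩
    obtain ⟨Φ, hΦ, hc⟩ := hN W hW c
    obtain ⟨i, B, hB, hBc⟩ := hd (Fin d → F) (by simp) fun T ↦ c ((T.prod ⊤).map Φ)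
    obtain ⟨i', S, hS, hSc⟩ := hM i B
      (hB ▸ Finset.single_le_sum (fun _ _ ↦ Nat.zero_le _) (Finset.mem_univ i))
      fun T ↦ c ((T.map B.subtype).map (Φ ∘ₗ LinearMap.inl F _ F))
    have hB' : S.map B.subtype ≤ B := map_subtype_le B S
    have hdim : finrank F (S.map B.subtype) = Function.update f i (f i - 1) i' := by
      rw [finrank_map_subtype_eq, hS]
    have hgraph (T) (hT : T ≤ S.map B.subtype) (hTk : finrank F T = k + 1) :
        c (T.map (Φ ∘ₗ LinearMap.inl F _ F)) = i' := by
      obtain ⟨T, hTS, rfl, hTk'⟩ := exists_le_map_eq B.subtype_injective hT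
      exact hSc T hTS (hTk'.trans hTk)
    rcases eq_or_ne i' i with rfl | hi
    · refine ⟨i', ((S.map B.subtype).prod ⊤).map Φ, ?_, fun U hU hUk ↦ ?_⟩
      · rw [finrank_map_of_injective hΦ, finrank_prod_top, hdim, Function.update_self]
        have := h0 i'
        omega
      · obtain ⟨U, hUS, rfl, hUk'⟩ := exists_le_map_eq hΦ hU
        rw [hUk] at hUk'
        have hT : U.map (LinearMap.fst F _ F) ≤ S.map B.subtype :=
          by
          rintro _ ⟨x, hx, rfl⟩
          exact (hUS hx).1
        rcases eq_prod_top_or_eq_map_graph U with h | ⟨g, h⟩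
        · rw [h, finrank_prod_top] at hUk'
          rw [h]
          exact hBc _ (hT.trans hB') (by omega)
        · have hg : Function.Injective ((LinearMap.id : (Fin d → F) →ₗ[F] _).prod g) :=
            fun x y hxy ↦ congrArg Prod.fst hxy
          rw [h, finrank_map_of_injective hg] at hUk'
          rw [h, ← Submodule.map_comp, hc]
          exact hgraph _ hT hUk'
    · have hinj : Function.Injective (Φ ∘ₗ LinearMap.inl F _ F) :=
        hΦ.comp LinearMap.inl_injective
      refine ⟨i', (S.map B.subtype).map (Φ ∘ₗ LinearMap.inl F _ F), ?_, fun U hU hUk ↦ ?_⟩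
      · rw [finrank_map_of_injective hinj, hdim, Function.update_of_ne hi]
      · obtain ⟨T, hT, rfl, hTk⟩ := exists_le_map_eq hinj hU
        exact hgraph T hT (hTk.trans hUk)

theorem finite_comap_mkQ {F V : Type*} [Field F] [AddCommGroup V] [Module F V]
    (A : Submodule F V) [FiniteDimensional F A] (P : Submodule F (V ⧸ A))
    [FiniteDimensional F P] : FiniteDimensional F (P.comap A.mkQ) := by
  rw [FiniteDimensional, Module.Finite.iff_fg]
  refine fg_of_fg_map_of_fg_inf_ker A.mkQ ?_ ?_
  · rw [map_comap_eq_of_surjective A.mkQ_surjective]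
    exact Module.Finite.iff_fg.mp inferInstance
  · rw [ker_mkQ, inf_eq_right.mpr (by simpa using le_comap_mkQ A P)]
    exact Module.Finite.iff_fg.mp inferInstance

theorem finrank_comap_mkQ {F V : Type*} [Field F] [AddCommGroup V] [Module F V]
    (A : Submodule F V) [FiniteDimensional F A] (P : Submodule F (V ⧸ A))
    [FiniteDimensional F P] :
    finrank F (P.comap A.mkQ) = finrank F P + finrank F A := by
  have := finite_comap_mkQ A P
  have h := (A.mkQ.domRestrict (P.comap A.mkQ)).finrank_range_add_finrank_ker
  rw [LinearMap.range_domRestrict, map_comap_eq_of_surjective A.mkQ_surjective,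
    LinearMap.ker_domRestrict, ker_mkQ] at h
  rw [← h, ← submoduleOf, (submoduleOfEquivOfLe (le_comap_mkQ A P)).finrank_eq]

/-- For a countably infinite dimensional vector space `V` over `GF(2)` and a finite
dimensional subspace `A1 ≤ V`, the family of finite dimensional subspaces of `V`
containing `A1` has the Ramsey property: for `A1 ≤ A ≤ B` and any number of colors `r`
there is a finite dimensional `C` with `A1 ≤ C` such that every `r`-coloring of the
subspaces `U` with `A1 ≤ U ≤ C`, `dim U = dim A` is constant on those contained in some
`B'` with `A1 ≤ B' ≤ C` and `dim B' = dim B`. -/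
theorem ramsey_subspaces_containing_A1
    (V : Type*) [AddCommGroup V] [Module (ZMod 2) V]
    (hrank : Module.rank (ZMod 2) V = Cardinal.aleph0)
    (A1 A B : Submodule (ZMod 2) V)
    (hA1fin : FiniteDimensional (ZMod 2) A1)
    (hAfin : FiniteDimensional (ZMod 2) A)
    (hBfin : FiniteDimensional (ZMod 2) B)
    (hA1A : A1 ≤ A) (hAB : A ≤ B)
    (r : ℕ) :
    ∃ C : Submodule (ZMod 2) V,
      FiniteDimensional (ZMod 2) C ∧ A1 ≤ C ∧
      ∀ ξ : Submodule (ZMod 2) V → Fin r,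
        ∃ B' : Submodule (ZMod 2) V,
          A1 ≤ B' ∧ B' ≤ C ∧ finrank (ZMod 2) B' = finrank (ZMod 2) B ∧
          ∀ U U' : Submodule (ZMod 2) V,
            A1 ≤ U → U ≤ B' → finrank (ZMod 2) U = finrank (ZMod 2) A →
            A1 ≤ U' → U' ≤ B' → finrank (ZMod 2) U' = finrank (ZMod 2) A →
            ξ U = ξ U' := by
  have : Fact (Nat.Prime 2) := ⟨Nat.prime_two⟩
  obtain ⟨N, hN⟩ := exists_monochromatic_subspace (ZMod 2) (κ := Fin r)
    (finrank (ZMod 2) A - finrank (ZMod 2) A1)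
    fun _ ↦ finrank (ZMod 2) B - finrank (ZMod 2) A1
  obtain ⟨f, hf⟩ : ∃ f : (Fin N → ZMod 2) →ₗ[ZMod 2] V ⧸ A1, Function.Injective f := by
    refine le_rank_iff_exists_linearMap.mp (Cardinal.natCast_le_aleph0.trans ?_)
    by_contra! h
    refine (Cardinal.add_lt_aleph0 h (rank_lt_aleph0 (ZMod 2) A1)).ne ?_
    rw [rank_quotient_add_rank, hrank]
  refine ⟨(LinearMap.range f).comap A1.mkQ, finite_comap_mkQ _ _, le_comap_mkQ _ _, fun ξ ↦ ?_⟩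
  obtain ⟨i, S, hS, hSξ⟩ := hN (Fin N → ZMod 2) (by simp) fun T ↦ ξ ((T.map f).comap A1.mkQ)
  have hmono (U) (h1 : A1 ≤ U) (hU : U ≤ (S.map f).comap A1.mkQ)
      (hUA : finrank (ZMod 2) U = finrank (ZMod 2) A) : ξ U = i := by
    obtain ⟨T, hT, hTU, -⟩ := exists_le_map_eq hf (map_le_iff_le_comap.mpr hU)
    have hUT : (T.map f).comap A1.mkQ = U := by
      rw [hTU, comap_map_mkQ, sup_eq_right.mpr h1]
    have hfin := finrank_comap_mkQ A1 (T.map f)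
    rw [hUT, hUA, finrank_map_of_injective hf] at hfin
    rw [← hUT]
    exact hSξ T hT (by omega)
  refine ⟨(S.map f).comap A1.mkQ, le_comap_mkQ _ _, comap_mono LinearMap.map_le_range, ?_, ?_⟩
  · rw [finrank_comap_mkQ, finrank_map_of_injective hf, hS]
    exact Nat.sub_add_cancel (finrank_mono (hA1A.trans hAB))
  · intro U U' h1 h2 h3 h1' h2' h3'
    rw [hmono U h1 h2 h3, hmono U' h1' h2' h3']
end

section
/- Let F be a finite field. For all r ∈ ℕ and all t < k there exists n with the following property: for every n-dimensional vector space X over F and every r-coloring of the proper affine t-subspaces of X, there exists a proper affine k-subspace W ⊆ X such that every affine t-subspace of W is a proper affine t-subspace of X and all affine t-subspaces of W receive the same color. -/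
open Module Submodule

/-- The affine subspace (coset) `U + u`, as a subset. -/
def affineCoset {F X : Type*} [Field F] [AddCommGroup X] [Module F X]
    (U : Submodule F X) (u : X) : Set X :=
  {x | x - u ∈ U}

section AffineRamsey

universe u v

variable {F : Type u} [Field F]

/-- The coloring `ξ` gives the color `c` to all affine `t`-subspaces of some affine `k`-subspace
of `V`, where affine subspaces are the ranges of injective affine maps from coordinate spaces. -/
def HasMonoSubspace (F : Type u) [Field F] {V κ : Type*} [AddCommGroup V] [Module F V]
    (ξ : Set V → κ) (t k : ℕ) (c : κ) : Prop :=
  ∃ φ : (Fin k → F) →ᵃ[F] V, Function.Injective φ ∧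
    ∀ f : (Fin t → F) →ᵃ[F] (Fin k → F), Function.Injective f →
      ξ (Set.range fun y => φ (f y)) = c

/-- Affine Ramsey property: every `r`-coloring of subsets of some finite vector space is constant
on the affine `t`-subspaces of an affine `k`-subspace. -/
def AffineRamsey (F : Type u) [Field F] (r t k : ℕ) : Prop :=
  ∃ (V : Type u) (_ : AddCommGroup V) (_ : Module F V), Finite V ∧
    ∀ ξ : Set V → Fin r, ∃ c, HasMonoSubspace F ξ t k c

theorem AffineMap.exists_leftInverse_of_injective {V W : Type*} [AddCommGroup V] [Module F V]
    [AddCommGroup W] [Module F W] (j : V →ᵃ[F] W) (hj : Function.Injective j) :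
    ∃ g : W →ᵃ[F] V, ∀ x, g (j x) = x := by
  obtain ⟨g, hg⟩ := j.linear.exists_leftInverse_of_injective
    (LinearMap.ker_eq_bot.2 (j.linear_injective_iff.2 hj))
  refine ⟨g.toAffineMap - AffineMap.const F W (g (j 0)), fun x => ?_⟩
  have hx : j x = j.linear x + j 0 := by
    have := congrFun j.decomp x
    simpa using this
  have hgx : g (j.linear x) = x := LinearMap.congr_fun hg x
  simp [hx, hgx]

theorem finite_affineMap {V W : Type*} [AddCommGroup V] [Module F V]
    [AddCommGroup W] [Module F W] [Finite V] [Finite W] : Finite (V →ᵃ[F] W) :=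
  Finite.of_injective (fun f : V →ᵃ[F] W => (f : V → W)) DFunLike.coe_injective

/-- Spencer's lemma: inside `U × F ^ ι` there is a copy of `U × F` over `U` on which the color of a
graph over `S ⊆ U` depends only on `S`. -/
theorem exists_fiberwise_mono [Finite F] (U : Type u) [AddCommGroup U] [Module F U] [Finite U]
    (κ : Type v) [Finite κ] :
    ∃ (ι : Type) (_ : Finite ι), ∀ ξ : Set (U × (ι → F)) → κ,
      ∃ h : U × F →ᵃ[F] U × (ι → F), Function.Injective h ∧
        ∀ (S : Set U) (g g' : U →ᵃ[F] F),
          ξ ((fun x => h (x, g x)) '' S) = ξ ((fun x => h (x, g' x)) '' S) := by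
  have : Finite (U →ᵃ[F] F) := finite_affineMap
  obtain ⟨ι, hι, H⟩ := Combinatorics.Line.exists_mono_in_high_dimension (U →ᵃ[F] F) (Set U → κ)
  refine ⟨ι, inferInstance, fun ξ => ?_⟩
  obtain ⟨l, c, hl⟩ := H fun w S => ξ ((fun x => (x, fun i => w i x)) '' S)
  let h : U × F →ᵃ[F] U × (ι → F) := AffineMap.fst.prod
    (AffineMap.pi fun i => (l.idxFun i).elim AffineMap.snd fun a => a.comp AffineMap.fst)
  have h_graph (g : U →ᵃ[F] F) (x : U) : h (x, g x) = (x, fun i => l g i x) := by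
    refine Prod.ext rfl (funext fun i => ?_)
    cases hi : l.idxFun i <;> simp [h, hi, AffineMap.pi]
  refine ⟨h, ?_, fun S g g' => ?_⟩
  · rintro ⟨x, s⟩ ⟨y, s'⟩ hxy
    obtain ⟨i, hi⟩ := l.proper
    have h₁ : x = y := congrArg Prod.fst hxy
    have h₂ := congrFun (congrArg Prod.snd hxy) i
    exact Prod.ext h₁ (by simpa [h, hi, AffineMap.pi] using h₂)
  · simp only [h_graph]
    exact (congrFun (hl g) S).trans (congrFun (hl g') S).symm

theorem affineRamsey_zero [Finite F] (r k : ℕ) : AffineRamsey F r 0 k := by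
  obtain ⟨ι, hι, H⟩ := Combinatorics.Subspace.exists_mono_in_high_dimension F (Fin r) (Fin k)
  refine ⟨ι → F, inferInstance, inferInstance, inferInstance, fun ξ => ?_⟩
  obtain ⟨l, c, hl⟩ := H fun x => ξ {x}
  let φ : (Fin k → F) →ᵃ[F] (ι → F) := AffineMap.pi fun i =>
    (l.idxFun i).elim (AffineMap.const F _) fun e => (LinearMap.proj e).toAffineMap
  have hφ (x : Fin k → F) : φ x = l x := by
    funext i
    cases hi : l.idxFun i <;>
      simp [φ, hi, AffineMap.pi, Combinatorics.Subspace.apply_def]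
  refine ⟨c, φ, fun x y hxy => funext fun e => ?_, fun f _ => ?_⟩
  · obtain ⟨i, hi⟩ := l.proper e
    have := congrFun hxy i
    rwa [hφ, hφ, Combinatorics.Subspace.apply_inr hi, Combinatorics.Subspace.apply_inr hi] at this
  · rw [Set.range_unique, hφ]
    exact hl _

/-- An affine `(t + 1)`-subspace of `V × F` which is not a graph over its projection `P` to `V`
equals `P × F`, and `P` is an affine `t`-subspace. -/
theorem range_eq_prod_univ_of_not_injective {V : Type*} [AddCommGroup V] [Module F V] {t : ℕ}
    (p : (Fin (t + 1) → F) →ᵃ[F] V) (s : (Fin (t + 1) → F) →ᵃ[F] F)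
    (hps : Function.Injective fun y => (p y, s y)) (hp : ¬ Function.Injective p) :
    ∃ q : (Fin t → F) →ᵃ[F] V, Function.Injective q ∧
      (Set.range fun y => (p y, s y)) = Set.range q ×ˢ Set.univ := by
  have hps' : Function.Injective (p.linear.prod s.linear) :=
    (p.prod s).linear_injective_iff.2 hps
  have hker : ∀ v, p.linear v = 0 → s.linear v = 0 → v = 0 := fun v h₁ h₂ =>
    hps' (by simp [h₁, h₂])
  rw [← p.linear_injective_iff, ← LinearMap.ker_eq_bot, Submodule.eq_bot_iff] at hp
  push Not at hp
  obtain ⟨v, hv, hv0⟩ := hp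
  rw [LinearMap.mem_ker] at hv
  have hsv : s.linear v ≠ 0 := fun h => hv0 (hker v hv h)
  have hker1 : finrank F (LinearMap.ker p.linear) = 1 := by
    refine finrank_eq_one (⟨v, hv⟩ : LinearMap.ker p.linear)
      (fun h => hv0 (congrArg Subtype.val h)) ?_
    rintro ⟨w, hw⟩
    refine ⟨s.linear w / s.linear v, Subtype.ext ?_⟩
    rw [LinearMap.mem_ker] at hw
    refine sub_eq_zero.1 (hker _ ?_ ?_)
    · simp [hv, hw]
    · simp [hsv]
  have hrange : finrank F (LinearMap.range p.linear) = t := by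
    have := p.linear.finrank_range_add_finrank_ker
    simp only [finrank_fin_fun] at this
    omega
  let e : (Fin t → F) ≃ₗ[F] LinearMap.range p.linear :=
    LinearEquiv.ofFinrankEq _ _ (by simp [hrange])
  have hpd (y : Fin (t + 1) → F) : p y = p.linear y + p 0 := by
    simpa using congrFun p.decomp y
  have hsd (y : Fin (t + 1) → F) : s y = s.linear y + s 0 := by
    simpa using congrFun s.decomp y
  let q : (Fin t → F) →ᵃ[F] V :=
    ((LinearMap.range p.linear).subtype ∘ₗ e.toLinearMap).toAffineMap + AffineMap.const F _ (p 0)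
  have hq (z : Fin t → F) : q z = e z + p 0 := by simp [q]
  refine ⟨q, fun x y hxy => ?_, Set.ext ?_⟩
  · rw [hq, hq] at hxy
    exact e.injective (Subtype.ext (add_right_cancel hxy))
  · rintro ⟨a, b⟩
    simp only [Set.mem_range, Prod.mk.injEq, Set.mem_prod, Set.mem_univ, and_true]
    constructor
    · rintro ⟨y, rfl, -⟩
      exact ⟨e.symm ⟨p.linear y, y, rfl⟩, by rw [hq, hpd y]; simp⟩
    · rintro ⟨z, rfl⟩
      obtain ⟨y, hy⟩ := (e z).2
      refine ⟨y + ((b - s y) / s.linear v) • v, ?_, ?_⟩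
      · rw [hpd, hq, ← hy]; simp [hv]
      · rw [hsd, map_add, map_smul, smul_eq_mul, div_mul_cancel₀ _ hsv, hsd y]; ring

theorem exists_hasMonoSubspace_of_sum_eq [Finite F] {r t : ℕ} (H : ∀ k, AffineRamsey F r t k)
    (N : ℕ) :
    ∃ (V : Type u) (_ : AddCommGroup V) (_ : Module F V), Finite V ∧
      ∀ (ξ : Set V → Fin r) (a : Fin r → ℕ), ∑ i, a i = N →
        ∃ i, HasMonoSubspace F ξ (t + 1) (a i) i := by
  have of_zero {V : Type u} [AddCommGroup V] [Module F V] (ξ : Set V → Fin r) (a : Fin r → ℕ)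
      (i : Fin r) (hi : a i = 0) : HasMonoSubspace F ξ (t + 1) (a i) i := by
    rw [hi]
    refine ⟨AffineMap.const F _ 0, Function.injective_of_subsingleton _, fun f hf => ?_⟩
    exact absurd (hf (Subsingleton.elim (f 0) (f 1))) zero_ne_one
  induction N with
  | zero =>
    refine ⟨PUnit, inferInstance, inferInstance, inferInstance, fun ξ a ha => ?_⟩
    exact ⟨ξ ∅, of_zero ξ a _ (by simpa using Finset.sum_eq_zero_iff.1 ha (ξ ∅))⟩
  | succ N ih =>
    obtain ⟨V, _, _, hV, ih⟩ := ih
    obtain ⟨U, _, _, hU, hUV⟩ := H (finrank F V)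
    obtain ⟨ι, _, hι⟩ := exists_fiberwise_mono (F := F) U (Fin r)
    refine ⟨U × (ι → F), inferInstance, inferInstance, inferInstance, fun ξ a ha => ?_⟩
    by_cases ha0 : ∃ i, a i = 0
    · exact ha0.imp fun i => of_zero ξ a i
    push Not at ha0
    obtain ⟨h, h_inj, hS⟩ := hι ξ
    obtain ⟨c, ψ₀, hψ₀, hc⟩ := hUV fun S => ξ (h '' (S ×ˢ Set.univ))
    let e : V ≃ₗ[F] (Fin (finrank F V) → F) := LinearEquiv.ofFinrankEq _ _ (by simp)
    let ψ : V →ᵃ[F] U := ψ₀.comp e.toLinearMap.toAffineMap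
    have hψ : Function.Injective ψ := hψ₀.comp e.injective
    have hvert (f : (Fin t → F) →ᵃ[F] V) (hf : Function.Injective f) :
        ξ (h '' ((Set.range fun y => ψ (f y)) ×ˢ Set.univ)) = c :=
      hc (e.toLinearMap.toAffineMap.comp f) (e.injective.comp hf)
    obtain ⟨i, hi⟩ := ih (fun S => ξ ((fun x => h (ψ x, 0)) '' S))
      (Function.update a c (a c - 1)) (by
        have h₁ := Finset.sum_update_of_mem (Finset.mem_univ c) a (a c - 1)
        have h₂ := Finset.add_sum_erase Finset.univ a (Finset.mem_univ c)
        have := Nat.pos_of_ne_zero (ha0 c)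
        rw [Finset.sdiff_singleton_eq_erase] at h₁
        omega)
    refine ⟨i, ?_⟩
    by_cases hic : i = c
    · subst hic
      have hm : a i = Function.update a i (a i - 1) i + 1 := by
        have := Nat.pos_of_ne_zero (ha0 i)
        rw [Function.update_self]; omega
      rw [hm]
      generalize Function.update a i (a i - 1) i = m at hi
      obtain ⟨φ, hφ, hi⟩ := hi
      simp only [← Set.range_comp, Function.comp_def] at hi
      let tail : (Fin (m + 1) → F) →ᵃ[F] (Fin m → F) :=
        (LinearMap.funLeft F F Fin.succ).toAffineMap
      let head : (Fin (m + 1) → F) →ᵃ[F] F := (LinearMap.proj 0).toAffineMap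
      have hth : Function.Injective fun y => (tail y, head y) := by
        intro x y hxy
        obtain ⟨h₁, h₂⟩ := Prod.mk.inj hxy
        funext j
        exact Fin.cases h₂ (fun j => congrFun h₁ j) j
      have hΦ : Function.Injective fun x => h (ψ (φ (tail x)), head x) := by
        intro x y hxy
        obtain ⟨h₁, h₂⟩ := Prod.mk.inj (h_inj hxy)
        exact hth (Prod.ext (hφ (hψ h₁)) h₂)
      refine ⟨h.comp ((ψ.comp (φ.comp tail)).prod head), hΦ, fun f hf => ?_⟩
      change ξ (Set.range fun y => h (ψ (φ (tail (f y))), head (f y))) = i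
      by_cases hp : Function.Injective (tail.comp f)
      · have hj : Function.Injective (ψ.comp (φ.comp (tail.comp f))) := hψ.comp (hφ.comp hp)
        obtain ⟨g, hg⟩ := AffineMap.exists_leftInverse_of_injective _ hj
        have := hS (Set.range (ψ.comp (φ.comp (tail.comp f)))) ((head.comp f).comp g)
          (AffineMap.const F _ 0)
        simp only [← Set.range_comp, Function.comp_def, AffineMap.comp_apply,
          AffineMap.const_apply] at this hg
        simp only [hg] at this
        rw [this]
        exact hi (tail.comp f) hp
      · obtain ⟨q, hq, hpq⟩ := range_eq_prod_univ_of_not_injective (tail.comp f) (head.comp f)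
          (hth.comp hf) hp
        rw [← hvert (φ.comp q) (hφ.comp hq)]
        congr 1
        have h₁ : (Set.range fun y => h (ψ (φ (tail (f y))), head (f y))) =
            (fun x : (Fin m → F) × F => h (ψ (φ x.1), x.2)) ''
              Set.range fun y => ((tail.comp f) y, (head.comp f) y) := by
          rw [← Set.range_comp]; rfl
        rw [h₁, hpq]
        ext z
        simp
    · rw [Function.update_of_ne hic] at hi
      obtain ⟨φ, hφ, hi⟩ := hi
      simp only [← Set.range_comp, Function.comp_def] at hi
      let ι₀ : U →ᵃ[F] U × F := (AffineMap.id F U).prod (AffineMap.const F U 0)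
      refine ⟨h.comp (ι₀.comp (ψ.comp φ)), fun x y hxy => ?_, hi⟩
      exact hφ (hψ (Prod.mk.inj (h_inj hxy)).1)

theorem affineRamsey [Finite F] (r t k : ℕ) : AffineRamsey F r t k := by
  induction t generalizing k with
  | zero => exact affineRamsey_zero r k
  | succ t ih =>
    obtain ⟨V, i₁, i₂, hV, H⟩ := exists_hasMonoSubspace_of_sum_eq ih (r * k)
    exact ⟨V, i₁, i₂, hV, fun ξ => H ξ (fun _ => k) (by simp)⟩

/-- A coset contained in the image of an affine embedding is the image of an affine subspace. -/
theorem exists_affineCoset_eq_range {K X : Type*} [AddCommGroup K] [Module F K]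
    [FiniteDimensional F K] [AddCommGroup X] [Module F X] (L : K →ₗ[F] X)
    (hL : Function.Injective L) {t : ℕ} (U : Submodule F X) (hU : U ≤ LinearMap.range L)
    (ht : finrank F U = t) (x₀ : K) (w : X) :
    ∃ f : (Fin t → F) →ᵃ[F] K, Function.Injective f ∧
      affineCoset U (L x₀ + w) = Set.range fun y => L (f y) + w := by
  have : FiniteDimensional F U := Submodule.finiteDimensional_of_le hU
  obtain ⟨g, hg⟩ := L.exists_leftInverse_of_injective (LinearMap.ker_eq_bot.2 hL)
  have hLg (x : U) : L (g x) = x := by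
    obtain ⟨k, hk⟩ := hU x.2
    rw [← hk]
    exact congrArg L (LinearMap.congr_fun hg k)
  let e : (Fin t → F) ≃ₗ[F] U := LinearEquiv.ofFinrankEq _ _ (by simp [ht])
  let f : (Fin t → F) →ᵃ[F] K :=
    (g ∘ₗ U.subtype ∘ₗ e.toLinearMap).toAffineMap + AffineMap.const F _ x₀
  have hf (y : Fin t → F) : L (f y) = e y + L x₀ := by simp [f, hLg]
  refine ⟨f, fun x y hxy => e.injective (Subtype.ext ?_), Set.ext fun z => ?_⟩
  · have := congrArg L hxy
    rwa [hf, hf, add_left_inj] at this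
  · simp only [hf, Set.mem_range]
    constructor
    · intro hz
      exact ⟨e.symm ⟨_, hz⟩, by rw [e.apply_symm_apply, add_assoc]; exact sub_add_cancel _ _⟩
    · rintro ⟨y, rfl⟩
      have : (e y : X) + L x₀ + w - (L x₀ + w) = e y := by abel
      change _ ∈ U
      rw [this]
      exact (e y).2

end AffineRamsey

/-- Ramsey theorem for proper affine subspaces: over a finite field `F`, for all `r` and
`t < k` there is `n` such that for every `n`-dimensional vector space `X` over `F` and
every `r`-coloring of the proper affine `t`-subspaces of `X` (cosets `U + u` with
`dim U = t`, `u ∉ U`), there is a proper affine `k`-subspace `W0 + w` of `X` all of whose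
affine `t`-subspaces are proper affine `t`-subspaces of `X` and get the same color. -/
theorem proper_affine_ramsey
    (F : Type*) [Field F] [Fintype F] :
    ∀ r t k : ℕ, t < k → ∃ n : ℕ,
      ∀ (X : Type*) [AddCommGroup X] [Module F X],
        finrank F X = n →
        ∀ ξ : Set X → Fin r,
          ∃ (W0 : Submodule F X) (w : X),
            finrank F W0 = k ∧ w ∉ W0 ∧
            (∀ (U : Submodule F X) (u : X),
              U ≤ W0 → finrank F U = t → u ∈ affineCoset W0 w → u ∉ U) ∧
            (∀ (U U' : Submodule F X) (u u' : X),
              U ≤ W0 → finrank F U = t → u ∈ affineCoset W0 w →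
              U' ≤ W0 → finrank F U' = t → u' ∈ affineCoset W0 w →
              ξ (affineCoset U u) = ξ (affineCoset U' u')) := by
  intro r t k _
  obtain ⟨V, _, _, _, H⟩ := affineRamsey (F := F) r t k
  refine ⟨finrank F (V × F), fun X _ _ hX ξ => ?_⟩
  have : FiniteDimensional F X := FiniteDimensional.of_finrank_pos (by rw [hX]; simp)
  let E : (V × F) ≃ₗ[F] X := LinearEquiv.ofFinrankEq _ _ hX.symm
  obtain ⟨c, φ, hφ, hc⟩ := H fun S => ξ ((fun x => E (x, 1)) '' S)
  simp only [← Set.range_comp, Function.comp_def] at hc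
  let L : (Fin k → F) →ₗ[F] X := E.toLinearMap ∘ₗ LinearMap.inl F V F ∘ₗ φ.linear
  let w : X := E (φ 0, 1)
  have hL : Function.Injective L :=
    E.injective.comp (LinearMap.inl_injective.comp (φ.linear_injective_iff.2 hφ))
  have hE (y : Fin k → F) : E (φ y, 1) = L y + w := by
    have hy : φ y = φ.linear y + φ 0 := by simpa using congrFun φ.decomp y
    simp [L, w, ← map_add, hy]
  have hw : w ∉ LinearMap.range L := by
    rintro ⟨y, hy⟩
    exact zero_ne_one (congrArg Prod.snd (E.injective hy))
  have hcolor (U : Submodule F X) (u : X) (hU : U ≤ LinearMap.range L) (ht : finrank F U = t)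
      (hu : u ∈ affineCoset (LinearMap.range L) w) : ξ (affineCoset U u) = c := by
    obtain ⟨x₀, hx₀⟩ := hu
    obtain ⟨f, hf, hUf⟩ := exists_affineCoset_eq_range L hL U hU ht x₀ w
    rw [hx₀, sub_add_cancel] at hUf
    rw [hUf, ← hc f hf]
    simp only [hE]
  refine ⟨LinearMap.range L, w, ?_, hw, fun U u hU _ hu huU => hw ?_, ?_⟩
  · rw [LinearMap.finrank_range_of_inj hL, finrank_fin_fun]
  · have := Submodule.sub_mem _ (hU huU) hu
    rwa [sub_sub_cancel] at this
  · intro U U' u u' hU ht hu hU' ht' hu'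
    rw [hcolor U u hU ht hu, hcolor U' u' hU' ht' hu']
end
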